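/- Let z(n,k) denote the number of ordered labeled trees on the vertex set {0,1,...,n} that consist of a decreasing tree with k edges together with n-k additional increasing leaves attached to vertices of that decreasing tree. Then z(n,n) = (2n-1)!! for all n ≥ 0, where (2n-1)!! = (2n-1)(2n-3)···3·1 and (-1)!! = 1. -/

import Mathlib

/-- An ordered labeled tree: a root label together with an ordered list of subtrees. -/
inductive OTree : Type
  | node : ℕ → List OTree → OTree

namespace OTree

/-- The label of the root. -/
def root : OTree → ℕ
  | node a _ => a

/-- The list of subtrees of the root (in order). -/
def children : OTree → List OTree
  | node _ ts => ts

mutual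
  /-- The list of all vertex labels of the tree. -/
  def labels : OTree → List ℕ
    | node a ts => a :: labelsList ts
  def labelsList : List OTree → List ℕ
    | [] => []
    | t :: ts => labels t ++ labelsList ts
end

/-- The number of vertices of the tree. -/
def size (T : OTree) : ℕ := T.labels.length

mutual
  /-- The maximal decreasing subtree from the root: keep exactly the children whose
  label is smaller than their parent's label, recursively. -/
  def md : OTree → OTree
    | node a ts => node a (mdList a ts)
  def mdList : ℕ → List OTree → List OTree
    | _, [] => []
    | a, t :: ts => (if t.root < a then [md t] else []) ++ mdList a ts
end

mutual
  /-- `IsZ T` states that every vertex of `T` not in the maximal decreasing subtree is a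
  leaf (attached by an increasing edge to a vertex of the maximal decreasing subtree). -/
  def IsZ : OTree → Prop
    | node a ts => IsZList a ts
  def IsZList : ℕ → List OTree → Prop
    | _, [] => True
    | a, t :: ts => (if t.root < a then IsZ t else t.children = []) ∧ IsZList a ts
end

/-- `T.OnRange n` : the vertices of `T` are labeled by distinct labels and the set of
labels is exactly `{0, 1, …, n}`. -/
def OnRange (T : OTree) (n : ℕ) : Prop :=
  T.labels.Nodup ∧ ∀ i, i ∈ T.labels ↔ i ≤ n

end OTree

/-- `T` is a member of `Z_{n,k}`: an ordered labeled tree on `{0,…,n}` consisting of a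
decreasing tree with `k` edges (its maximal decreasing subtree, with `k+1` vertices)
together with `n-k` additional increasing leaves attached to it. -/
def MemZ (T : OTree) (n k : ℕ) : Prop :=
  T.OnRange n ∧ T.md.size = k + 1 ∧ T.IsZ

namespace OTree

theorem forest_ind {P : List OTree → Prop} (nil : P [])
    (cons : ∀ b cs ts, P cs → P ts → P (node b cs :: ts)) : ∀ L, P L
  | [] => nil
  | node b cs :: ts => cons b cs ts (forest_ind nil cons cs) (forest_ind nil cons ts)

/-- All ways of inserting a new leaf `v` into a forest. -/
def insL (v : ℕ) : List OTree → List (List OTree)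
  | [] => [[node v []]]
  | node b cs :: ts =>
    (node v [] :: node b cs :: ts) ::
      ((insL v cs).map (fun c => node b c :: ts) ++ (insL v ts).map (fun t => node b cs :: t))

/-- Delete the vertex `v` (assumed a leaf) from a forest. -/
def delL (v : ℕ) : List OTree → List OTree
  | [] => []
  | node b cs :: ts => if b = v then ts else node b (delL v cs) :: delL v ts

/-- The forest hanging below a vertex labeled `a` is decreasing. -/
def DecL (a : ℕ) : List OTree → Prop
  | [] => True
  | node b cs :: ts => b < a ∧ DecL b cs ∧ DecL a ts

theorem labelsList_node (b : ℕ) (cs ts : List OTree) :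
    labelsList (node b cs :: ts) = b :: (labelsList cs ++ labelsList ts) := by
  simp [labelsList, labels]

theorem insL_length (v : ℕ) (L : List OTree) :
    (insL v L).length = 2 * (labelsList L).length + 1 := by
  induction L using forest_ind with
  | nil => simp [insL, labelsList]
  | cons b cs ts h1 h2 => simp [insL, labelsList_node, h1, h2]; ring

theorem insL_perm (v : ℕ) (L : List OTree) :
    ∀ L' ∈ insL v L, (labelsList L').Perm (v :: labelsList L) := by
  induction L using forest_ind with
  | nil => simp [insL, labelsList, labels]
  | cons b cs ts h1 h2 =>
    intro L' hL'
    simp only [insL, List.mem_cons, List.mem_append, List.mem_map] at hL'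
    rcases hL' with rfl | ⟨c, hc, rfl⟩ | ⟨t, ht, rfl⟩
    · simp [labels, labelsList]
    · rw [labelsList_node, labelsList_node]
      exact (((h1 c hc).append_right _).cons b).trans (List.Perm.swap _ _ _)
    · rw [labelsList_node, labelsList_node]
      refine (((h2 t ht).append_left _).cons b).trans ?_
      exact ((List.perm_middle).cons b).trans (List.Perm.swap _ _ _)

theorem insL_nodup (v : ℕ) (L : List OTree) (hv : v ∉ labelsList L) : (insL v L).Nodup := by
  induction L using forest_ind with
  | nil => simp [insL]
  | cons b cs ts h1 h2 =>
    simp only [labelsList_node, List.mem_cons, List.mem_append, not_or] at hv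
    obtain ⟨hb, hc, ht⟩ := hv
    simp only [insL, List.nodup_cons, List.mem_append, List.mem_map, not_or]
    refine ⟨⟨?_, ?_⟩, ?_⟩
    · rintro ⟨c, _, h⟩
      simp at h
    · rintro ⟨c, _, h⟩
      simp at h
      exact hb h.1.1.symm
    · rw [List.nodup_append]
      refine ⟨(h1 hc).map (fun x y h => by simpa using h),
        (h2 ht).map (fun x y h => by simpa using h), ?_⟩
      intro x hx y hy
      simp only [List.mem_map] at hx hy
      obtain ⟨c, hc', rfl⟩ := hx
      obtain ⟨t, ht', rfl⟩ := hy
      intro h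
      simp at h
      have := (insL_perm v cs c hc').mem_iff (a := v)
      rw [h.1] at this
      simp at this
      exact hc this

theorem delL_of_notMem (v : ℕ) (L : List OTree) (hv : v ∉ labelsList L) : delL v L = L := by
  induction L using forest_ind with
  | nil => simp [delL]
  | cons b cs ts h1 h2 =>
    simp only [labelsList_node, List.mem_cons, List.mem_append, not_or] at hv
    simp [delL, Ne.symm hv.1, h1 hv.2.1, h2 hv.2.2]

theorem delL_insL (v : ℕ) (L : List OTree) (hv : v ∉ labelsList L) :
    ∀ L' ∈ insL v L, delL v L' = L := by
  induction L using forest_ind with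
  | nil => simp [insL, delL]
  | cons b cs ts h1 h2 =>
    simp only [labelsList_node, List.mem_cons, List.mem_append, not_or] at hv
    obtain ⟨hb, hc, ht⟩ := hv
    intro L' hL'
    simp only [insL, List.mem_cons, List.mem_append, List.mem_map] at hL'
    rcases hL' with rfl | ⟨c, hc', rfl⟩ | ⟨t, ht', rfl⟩
    · simp [delL]
    · simp [delL, Ne.symm hb, h1 hc c hc', delL_of_notMem v ts ht]
    · simp [delL, Ne.symm hb, h2 ht t ht', delL_of_notMem v cs hc]

theorem insL_dec (v : ℕ) (L : List OTree) : ∀ a, DecL a L → v < a → (∀ i ∈ labelsList L, v < i) →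
    ∀ L' ∈ insL v L, DecL a L' := by
  induction L using forest_ind with
  | nil => simp +contextual [insL, DecL]
  | cons b cs ts h1 h2 =>
    intro a hd ha hv L' hL'
    simp only [labelsList_node, List.mem_cons, List.mem_append] at hv
    simp only [DecL] at hd
    simp only [insL, List.mem_cons, List.mem_append, List.mem_map] at hL'
    rcases hL' with rfl | ⟨c, hc', rfl⟩ | ⟨t, ht', rfl⟩
    · simp [DecL, hd, ha]
    · simp only [DecL]
      exact ⟨hd.1, h1 b hd.2.1 (hv b (by simp)) (fun i hi => hv i (by simp [hi])) c hc', hd.2.2⟩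
    · simp only [DecL]
      exact ⟨hd.1, hd.2.1, h2 a hd.2.2 ha (fun i hi => hv i (by simp [hi])) t ht'⟩

theorem DecL.lt {a : ℕ} {L : List OTree} (h : DecL a L) : ∀ i ∈ labelsList L, i < a := by
  induction L using forest_ind generalizing a with
  | nil => simp [labelsList]
  | cons b cs ts h1 h2 =>
    simp only [DecL] at h
    simp only [labelsList_node, List.mem_cons, List.mem_append]
    rintro i (rfl | hi | hi)
    · exact h.1
    · exact (h1 h.2.1 i hi).trans h.1
    · exact h2 h.2.2 i hi

theorem delL_spec (v : ℕ) (L : List OTree) : ∀ a, DecL a L → (labelsList L).Nodup →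
    (∀ i ∈ labelsList L, v ≤ i) → v ∈ labelsList L →
    DecL a (delL v L) ∧ L ∈ insL v (delL v L) := by
  induction L using forest_ind with
  | nil => simp [labelsList]
  | cons b cs ts h1 h2 =>
    intro a hd hn hv hm
    simp only [labelsList_node, List.mem_cons, List.mem_append] at hv hm
    simp only [DecL] at hd
    simp only [labelsList_node, List.nodup_cons, List.mem_append, not_or, List.nodup_append] at hn
    obtain ⟨hb, hnc, hnt, hdis⟩ := hn
    by_cases hbv : b = v
    · subst hbv
      have hcs : cs = [] := by
        cases cs with
        | nil => rfl
        | cons x xs =>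
          cases x with
          | node c ds =>
            have h3 := hd.2.1
            simp only [DecL] at h3
            have h4 := hv c (by simp [labelsList_node])
            omega
      subst hcs
      simp only [delL, if_true]
      refine ⟨hd.2.2, ?_⟩
      cases ts with
      | nil => simp [insL]
      | cons x xs => cases x; simp [insL]
    · simp only [delL, hbv, if_false]
      rcases hm with hm | hm | hm
      · exact absurd hm.symm hbv
      · have hvt : v ∉ labelsList ts := fun h => hdis v hm v h rfl
        rw [delL_of_notMem v ts hvt]
        have := h1 b hd.2.1 hnc (fun i hi => hv i (by simp [hi])) hm
        refine ⟨by simp only [DecL]; exact ⟨hd.1, this.1, hd.2.2⟩, ?_⟩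
        simp only [insL, List.mem_cons, List.mem_append, List.mem_map]
        exact Or.inr (Or.inl ⟨_, this.2, rfl⟩)
      · have hvc : v ∉ labelsList cs := fun h => hdis v h v hm rfl
        rw [delL_of_notMem v cs hvc]
        have := h2 a hd.2.2 hnt (fun i hi => hv i (by simp [hi])) hm
        refine ⟨by simp only [DecL]; exact ⟨hd.1, hd.2.1, this.1⟩, ?_⟩
        simp only [insL, List.mem_cons, List.mem_append, List.mem_map]
        exact Or.inr (Or.inr ⟨_, this.2, rfl⟩)

/-- Decreasing forests below `n` with label set `{k, …, n-1}`. -/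
def Good (n k : ℕ) (L : List OTree) : Prop :=
  DecL n L ∧ (labelsList L).Nodup ∧ ∀ i, i ∈ labelsList L ↔ k ≤ i ∧ i < n

theorem Good.length {n k : ℕ} {L : List OTree} (h : Good n k L) :
    (labelsList L).length = n - k := by
  rw [← List.toFinset_card_of_nodup h.2.1, ← Nat.card_Ico]
  congr 1
  ext i
  simp [h.2.2 i]

/-- Enumeration of the decreasing forests with `m` vertices. -/
def enum (n : ℕ) : ℕ → List (List OTree)
  | 0 => [[]]
  | m + 1 => (enum n m).flatMap (insL (n - (m + 1)))

theorem good_succ {n k : ℕ} (hk : k < n) (L' : List OTree) :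
    Good n k L' ↔ ∃ L, Good n (k + 1) L ∧ L' ∈ insL k L := by
  constructor
  · rintro ⟨hd, hn, hm⟩
    obtain ⟨h1, h2⟩ := delL_spec k L' n hd hn (fun i hi => ((hm i).1 hi).1) ((hm k).2 ⟨le_rfl, hk⟩)
    have hp := insL_perm _ _ _ h2
    have hn' := hp.nodup_iff.1 hn
    rw [List.nodup_cons] at hn'
    refine ⟨_, ⟨h1, hn'.2, fun i => ?_⟩, h2⟩
    have hi := hp.mem_iff (a := i)
    rw [hm, List.mem_cons] at hi
    constructor
    · intro h
      have := hi.2 (Or.inr h)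
      have hne : i ≠ k := by rintro rfl; exact hn'.1 h
      omega
    · intro h
      rcases hi.1 (by omega) with h' | h'
      · omega
      · exact h'
  · rintro ⟨L, ⟨hd, hn, hm⟩, hL⟩
    have hp := insL_perm _ _ _ hL
    refine ⟨insL_dec k L n hd hk (fun i hi => ((hm i).1 hi).1) L' hL, ?_, fun i => ?_⟩
    · rw [hp.nodup_iff, List.nodup_cons]
      refine ⟨fun h => ?_, hn⟩
      have := (hm k).1 h
      omega
    · rw [hp.mem_iff, List.mem_cons, hm]
      omega

theorem enum_spec (n m : ℕ) (hm : m ≤ n) : (enum n m).Nodup ∧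
    (enum n m).length = Nat.doubleFactorial (2 * m - 1) ∧
    ∀ L, L ∈ enum n m ↔ Good n (n - m) L := by
  induction m with
  | zero =>
    refine ⟨by simp [enum], by simp [enum], fun L => ?_⟩
    simp only [enum, List.mem_singleton]
    constructor
    · rintro rfl
      refine ⟨by simp [DecL], by simp [labelsList], fun i => ?_⟩
      simp [labelsList]
    · rintro h
      have := h.length
      cases L with
      | nil => rfl
      | cons x xs => cases x; simp [labelsList_node] at this
  | succ m ih =>
    obtain ⟨h1, h2, h3⟩ := ih (by omega)
    have hk : n - m = (n - (m + 1)) + 1 := by omega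
    have hnot : ∀ L ∈ enum n m, n - (m + 1) ∉ labelsList L := by
      intro L hL h
      have := (((h3 L).1 hL).2.2 _).1 h
      omega
    refine ⟨?_, ?_, fun L => ?_⟩
    · rw [enum, List.nodup_flatMap]
      refine ⟨fun L hL => insL_nodup _ _ (hnot L hL), ?_⟩
      refine List.Pairwise.imp_of_mem ?_ h1
      intro x y hx hy hne z hz hz'
      exact hne ((delL_insL _ _ (hnot x hx) z hz).symm.trans (delL_insL _ _ (hnot y hy) z hz'))
    · rw [enum, List.length_flatMap]
      have : (enum n m).map (fun L => (insL (n - (m + 1)) L).length) =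
          (enum n m).map (fun _ => 2 * m + 1) := by
        apply List.map_congr_left
        intro L hL
        rw [insL_length, ((h3 L).1 hL).length]
        omega
      rw [this, List.map_const', List.sum_replicate, h2, smul_eq_mul]
      cases m with
      | zero => rfl
      | succ m =>
        have e1 : 2 * (m + 1) - 1 = 2 * m + 1 := by omega
        have e2 : 2 * (m + 1 + 1) - 1 = 2 * m + 1 + 2 := by omega
        rw [e1, e2, Nat.doubleFactorial_add_two]
        ring
    · rw [good_succ (by omega), ← hk, enum, List.mem_flatMap]
      simp only [h3]

theorem mdList_length (L : List OTree) : ∀ a,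
    (labelsList (mdList a L)).length ≤ (labelsList L).length ∧
    ((labelsList (mdList a L)).length = (labelsList L).length ↔ DecL a L) := by
  induction L using forest_ind with
  | nil => simp [mdList, DecL]
  | cons b cs ts h1 h2 =>
    intro a
    obtain ⟨h3, h4⟩ := h1 b
    obtain ⟨h5, h6⟩ := h2 a
    by_cases hb : b < a
    · simp only [mdList, root, hb, if_true, md, List.singleton_append, labelsList_node, DecL,
        List.length_cons, List.length_append, true_and, ← h4, ← h6]
      omega
    · simp only [mdList, root, hb, if_false, List.nil_append, labelsList_node, DecL,
        List.length_cons, List.length_append, false_and, iff_false]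
      omega

theorem DecL.isZ {a : ℕ} {L : List OTree} (h : DecL a L) : IsZList a L := by
  induction L using forest_ind generalizing a with
  | nil => simp [IsZList]
  | cons b cs ts h1 h2 =>
    simp only [DecL] at h
    simp [IsZList, root, h.1, IsZ, h1 h.2.1, h2 h.2.2]

theorem memZ_iff (T : OTree) (n : ℕ) : MemZ T n n ↔ ∃ L, Good n 0 L ∧ node n L = T := by
  constructor
  · rintro ⟨⟨hn, hm⟩, hs, -⟩
    cases T with
    | node a L =>
      have hlen : (labels (node a L)).length = n + 1 := by
        rw [← List.toFinset_card_of_nodup hn, ← Finset.card_range (n + 1)]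
        congr 1
        ext i
        simp [hm i]
      simp only [labels, List.length_cons] at hlen
      simp only [size, md, labels, List.length_cons] at hs
      have hd : DecL a L := ((mdList_length L a).2).1 (by omega)
      simp only [labels, List.mem_cons] at hm
      simp only [labels, List.nodup_cons] at hn
      have ha : a = n := by
        have h1 := (hm a).1 (Or.inl rfl)
        rcases (hm n).2 le_rfl with h | h
        · exact h.symm
        · have := hd.lt n h
          omega
      subst ha
      refine ⟨L, ⟨hd, hn.2, fun i => ⟨fun h => ⟨Nat.zero_le _, hd.lt i h⟩, fun h => ?_⟩⟩, rfl⟩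
      rcases (hm i).2 h.2.le with h' | h'
      · omega
      · exact h'
  · rintro ⟨L, hg, rfl⟩
    have hl := hg.length
    obtain ⟨hd, hn, hm⟩ := hg
    refine ⟨⟨?_, fun i => ?_⟩, ?_, ?_⟩
    · simp only [labels, List.nodup_cons]
      exact ⟨fun h => lt_irrefl _ (hd.lt n h), hn⟩
    · simp only [labels, List.mem_cons, hm]
      omega
    · simp only [size, md, labels, List.length_cons]
      rw [((mdList_length L n).2).2 hd, hl]
      rfl
    · simp only [IsZ]
      exact hd.isZ

end OTree

/-- `z(n,n) = (2n-1)!!` for all `n ≥ 0`, i.e. the number of decreasing ordered labeled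
trees on `{0,…,n}` is the double factorial `(2n-1)!!` (with `(-1)!! = 1`). -/
theorem z_diagonal (n : ℕ) :
    Nat.card {T : OTree // MemZ T n n} = Nat.doubleFactorial (2 * n - 1) := by
  obtain ⟨h1, h2, h3⟩ := OTree.enum_spec n n le_rfl
  classical
  have hinj : Function.Injective (OTree.node n) := fun x y h => by simpa using h
  rw [← h2, ← List.length_map (OTree.node n), ← List.toFinset_card_of_nodup (h1.map hinj)]
  apply Nat.subtype_card
  intro T
  rw [OTree.memZ_iff, List.mem_toFinset, List.mem_map]
  simp only [h3, Nat.sub_self]
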